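/- arXiv:2005.05492 — 6 statements merged into one kernel-verified Lean document; each statement's English description precedes it below -/
import Mathlib

section
/- Let n ≥ 3 and let i, j, k ∈ Fin n be pairwise distinct. Then: (i) every A ∈ Ê_n with A_{ij} = 0 and A_{jk} = 0 satisfies A_{ik} = 0 and A_{ij} + A_{jk} = A_{ik}; and (ii) there exists H ∈ Ê_n with H_{ij} = H_{jk} = H_{ik} = 0, with H_{rs} > 0 for every ordered pair (r,s) of distinct indices other than (i,j), (j,k), (i,k), and with H_{rs} + H_{st} > H_{rt} for every triple (r,s,t) of pairwise distinct indices with (r,s,t) ≠ (i,j,k). (The only defining inequalities of Ê_n exactly satisfied by all of N_{ij} ∩ N_{jk} are N_{ij}, N_{jk}, N_{ik} and T_{ijk}.) -/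
/-- The cone of quasi-semimetrics on `n` points. -/
def QSM (n : ℕ) : Set (Fin n → Fin n → ℝ) :=
  {A | (∀ i, A i i = 0) ∧ (∀ i j : Fin n, i ≠ j → 0 ≤ A i j) ∧
    (∀ i j k : Fin n, i ≠ j → j ≠ k → i ≠ k → A i k ≤ A i j + A j k)}

/-!
The zeros of a quasi-semimetric form a transitive relation, which gives the first part.
Conversely, every strict order `R` on a finite set is the zero pattern of a quasi-semimetric that
has no tight triangle inequality beyond those along chains `R r s`, `R s t`: if `p` is a potential
strictly increasing along `R` with oscillation less than `c`, give the pair `(r, s)` the weight `0`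
when `R r s` and `c + p r - p s` otherwise. Consider a triangle `r, s, t` in which `(r, t)` has
positive weight. The potential terms telescope, so two positive legs leave a slack of `c`, while a
single positive leg leaves a slack equal to the increase of `p` along the other leg. The second part
is the case of the chain `i < j < k` with all remaining points isolated.
-/

namespace QSM

variable {n : ℕ} {A : Fin n → Fin n → ℝ}

lemma nonneg (hA : A ∈ QSM n) (i j : Fin n) : 0 ≤ A i j := by
  obtain rfl | hij := eq_or_ne i j
  · exact (hA.1 i).ge
  · exact hA.2.1 i j hij

lemma triangle (hA : A ∈ QSM n) (i j k : Fin n) : A i k ≤ A i j + A j k := by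
  obtain rfl | hij := eq_or_ne i j
  · rw [hA.1 i, zero_add]
  obtain rfl | hjk := eq_or_ne j k
  · rw [hA.1 j, add_zero]
  obtain rfl | hik := eq_or_ne i k
  · rw [hA.1 i]
    exact add_nonneg (nonneg hA i j) (nonneg hA j i)
  · exact hA.2.2 i j k hij hjk hik

lemma eq_zero_trans (hA : A ∈ QSM n) {i j k : Fin n} (hij : A i j = 0) (hjk : A j k = 0) :
    A i k = 0 :=
  le_antisymm (by simpa [hij, hjk] using triangle hA i j k) (nonneg hA i k)

end QSM

section PotentialMatrix

variable {α : Type*} {R : α → α → Prop} {p : α → ℝ} {c : ℝ} {r s t : α}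

open Classical in
/-- The matrix that vanishes on the diagonal and along the relation `R`, and is the constant `c`
shifted by the difference of the potential `p` elsewhere. For a strict order `R` along which `p`
increases, with oscillation less than `c`, it is a quasi-semimetric with zero pattern `R`. -/
noncomputable def potentialMatrix (R : α → α → Prop) (p : α → ℝ) (c : ℝ) (r s : α) : ℝ :=
  if r = s ∨ R r s then 0 else c + p r - p s

lemma potentialMatrix_eq_zero (h : r = s ∨ R r s) : potentialMatrix R p c r s = 0 :=
  if_pos h

lemma potentialMatrix_of_rel (h : R r s) : potentialMatrix R p c r s = 0 :=
  potentialMatrix_eq_zero (Or.inr h)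

lemma potentialMatrix_of_not_rel (hrs : r ≠ s) (h : ¬R r s) :
    potentialMatrix R p c r s = c + p r - p s :=
  if_neg (not_or.mpr ⟨hrs, h⟩)

lemma potentialMatrix_pos (hc : ∀ r s, p s - p r < c) (hrs : r ≠ s) (h : ¬R r s) :
    0 < potentialMatrix R p c r s := by
  rw [potentialMatrix_of_not_rel hrs h]
  linarith [hc r s]

lemma potentialMatrix_nonneg (hc : ∀ r s, p s - p r < c) (r s : α) :
    0 ≤ potentialMatrix R p c r s := by
  by_cases h : r = s ∨ R r s
  · exact (potentialMatrix_eq_zero h).ge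
  · rw [not_or] at h
    exact (potentialMatrix_pos hc h.1 h.2).le

lemma potentialMatrix_add_pos (hc : ∀ r s, p s - p r < c) (hrs : r ≠ s) (hst : s ≠ t)
    (h : ¬(R r s ∧ R s t)) :
    0 < potentialMatrix R p c r s + potentialMatrix R p c s t := by
  obtain hRrs | hRst := not_and_or.mp h
  · exact add_pos_of_pos_of_nonneg (potentialMatrix_pos hc hrs hRrs) (potentialMatrix_nonneg hc s t)
  · exact add_pos_of_nonneg_of_pos (potentialMatrix_nonneg hc r s) (potentialMatrix_pos hc hst hRst)

lemma potentialMatrix_lt_add (hp : ∀ r s, R r s → p r < p s) (hc : ∀ r s, p s - p r < c)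
    (hrs : r ≠ s) (hst : s ≠ t) (h : ¬(R r s ∧ R s t)) :
    potentialMatrix R p c r t < potentialMatrix R p c r s + potentialMatrix R p c s t := by
  by_cases hrt : r = t ∨ R r t
  · rw [potentialMatrix_eq_zero hrt]
    exact potentialMatrix_add_pos hc hrs hst h
  · rw [not_or] at hrt
    rw [potentialMatrix_of_not_rel hrt.1 hrt.2]
    by_cases hRrs : R r s
    · have hRst : ¬R s t := fun hRst => h ⟨hRrs, hRst⟩
      rw [potentialMatrix_of_rel hRrs, potentialMatrix_of_not_rel hst hRst]
      linarith [hp r s hRrs]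
    · rw [potentialMatrix_of_not_rel hrs hRrs]
      by_cases hRst : R s t
      · rw [potentialMatrix_of_rel hRst]
        linarith [hp s t hRst]
      · rw [potentialMatrix_of_not_rel hst hRst]
        linarith [hc r r]

lemma potentialMatrix_mem_QSM {n : ℕ} {R : Fin n → Fin n → Prop} [IsTrans (Fin n) R]
    {p : Fin n → ℝ} (hp : ∀ r s, R r s → p r < p s) (hc : ∀ r s, p s - p r < c) :
    potentialMatrix R p c ∈ QSM n := by
  refine ⟨fun r => potentialMatrix_eq_zero (Or.inl rfl), fun r s _ => potentialMatrix_nonneg hc r s,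
    fun r s t hrs hst _ => ?_⟩
  by_cases h : R r s ∧ R s t
  · rw [potentialMatrix_of_rel (trans_of R h.1 h.2), potentialMatrix_of_rel h.1,
      potentialMatrix_of_rel h.2, add_zero]
  · exact (potentialMatrix_lt_add hp hc hrs hst h).le

end PotentialMatrix

lemma exists_bounded_potential {α : Type*} [Finite α] (R : α → α → Prop) [IsStrictOrder α R] :
    ∃ (p : α → ℝ) (c : ℝ), (∀ r s, R r s → p r < p s) ∧ ∀ r s, p s - p r < c := by
  refine ⟨fun s => ({r | R r s} : Set α).ncard, Nat.card α + 1, fun r s hrs => ?_, fun r s => ?_⟩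
  · have below_ssubset : {x | R x r} ⊂ {x | R x s} :=
      (Set.ssubset_iff_of_subset fun _ hx => trans_of R hx hrs).mpr ⟨r, hrs, irrefl_of R r⟩
    exact Nat.cast_lt.mpr (Set.ncard_lt_ncard below_ssubset)
  · have below_le : (({x | R x s} : Set α).ncard : ℝ) ≤ Nat.card α :=
      mod_cast Set.ncard_le_card _
    exact (sub_le_self _ (Nat.cast_nonneg _)).trans_lt (below_le.trans_lt (lt_add_one _))

theorem exists_mem_QSM_of_isStrictOrder {n : ℕ} (R : Fin n → Fin n → Prop)
    [IsStrictOrder (Fin n) R] :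
    ∃ H ∈ QSM n, (∀ r s, R r s → H r s = 0) ∧ (∀ r s, r ≠ s → ¬R r s → 0 < H r s) ∧
      ∀ r s t, r ≠ s → s ≠ t → ¬(R r s ∧ R s t) → H r t < H r s + H s t := by
  obtain ⟨p, c, hp, hc⟩ := exists_bounded_potential R
  exact ⟨potentialMatrix R p c, potentialMatrix_mem_QSM hp hc,
    fun _ _ => potentialMatrix_of_rel, fun _ _ => potentialMatrix_pos hc,
    fun _ _ _ => potentialMatrix_lt_add hp hc⟩

section ChainRel

variable {α : Type*} {i j k r s t : α}

/-- The strict order on `α` whose only comparabilities are those of the chain `i < j < k`, for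
pairwise distinct `i`, `j`, `k`. -/
def ChainRel (i j k r s : α) : Prop :=
  (r, s) = (i, j) ∨ (r, s) = (j, k) ∨ (r, s) = (i, k)

lemma ChainRel.eq_of_chainRel (hij : i ≠ j) (hjk : j ≠ k) (hik : i ≠ k)
    (hrs : ChainRel i j k r s) (hst : ChainRel i j k s t) : (r, s, t) = (i, j, k) := by
  grind [ChainRel]

lemma isStrictOrder_chainRel (hij : i ≠ j) (hjk : j ≠ k) (hik : i ≠ k) :
    IsStrictOrder α (ChainRel i j k) where
  irrefl r := by grind [ChainRel]
  trans r s t hrs hst := by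
    obtain ⟨rfl, -, rfl⟩ : r = i ∧ s = j ∧ t = k := by
      simpa only [Prod.mk.injEq] using hrs.eq_of_chainRel hij hjk hik hst
    exact Or.inr (Or.inr rfl)

end ChainRel

/-- The only defining inequalities of `Ê_n` exactly satisfied by all of
`N_{ij} ∩ N_{jk}` are `N_{ij}`, `N_{jk}`, `N_{ik}` and `T_{ijk}`. -/
theorem stmt13 (n : ℕ) (hn : 3 ≤ n) (i j k : Fin n)
    (hij : i ≠ j) (hjk : j ≠ k) (hik : i ≠ k) :
    (∀ A ∈ QSM n, A i j = 0 → A j k = 0 →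
      A i k = 0 ∧ A i j + A j k = A i k) ∧
    (∃ H ∈ QSM n, H i j = 0 ∧ H j k = 0 ∧ H i k = 0 ∧
      (∀ r s : Fin n, r ≠ s → (r, s) ≠ (i, j) → (r, s) ≠ (j, k) → (r, s) ≠ (i, k) →
        0 < H r s) ∧
      (∀ r s t : Fin n, r ≠ s → s ≠ t → r ≠ t → (r, s, t) ≠ (i, j, k) →
        H r t < H r s + H s t)) := by
  refine ⟨fun A hA hAij hAjk => ?_, ?_⟩
  · have hAik : A i k = 0 := QSM.eq_zero_trans hA hAij hAjk
    exact ⟨hAik, by rw [hAij, hAjk, hAik, add_zero]⟩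
  · have := isStrictOrder_chainRel hij hjk hik
    obtain ⟨H, hH, hzero, hpos, hlt⟩ := exists_mem_QSM_of_isStrictOrder (ChainRel i j k)
    refine ⟨H, hH, hzero i j (Or.inl rfl), hzero j k (Or.inr (Or.inl rfl)),
      hzero i k (Or.inr (Or.inr rfl)), fun r s hrs hneij hnejk hneik => ?_,
      fun r s t hrs hst _ hne => ?_⟩
    · exact hpos r s hrs (not_or.mpr ⟨hneij, not_or.mpr ⟨hnejk, hneik⟩⟩)
    · exact hlt r s t hrs hst fun h => hne (h.1.eq_of_chainRel hij hjk hik h.2)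
end

section
/- Let n ≥ 3. (i) For every ordered pair (r,s) of distinct indices in Fin n, there exists A ∈ Ê_n with A_{rs} = 0, A_{ij} > 0 for all distinct (i,j) ≠ (r,s), and A_{ij} + A_{jk} > A_{ik} for all pairwise distinct i, j, k. (ii) For every triple (r,s,t) of pairwise distinct indices, there exists A ∈ Ê_n with A_{rs} + A_{st} = A_{rt}, with A_{ij} > 0 for all distinct i, j, and with A_{ij} + A_{jk} > A_{ik} for every pairwise distinct triple (i,j,k) ≠ (r,s,t). (Consequently all nonnegativity and triangle inequalities are facet-defining for Ê_n.) -/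
/-!
Both witnesses perturb the matrix whose off-diagonal entries are all `2`, using the vector
`p = e_a - e_b`, for which `p x - p y ≤ 2` with equality only at `(x, y) = (a, b)`.

For `N_{rs}`, take `A i j = 2 - (p i - p j)` with `p = e_r - e_s`: the potential differences cancel
in every triangle inequality, leaving slack `2`, and the bound on `p` says that `A r s = 0` is the
only off-diagonal zero. For `T_{rst}`, add `p = e_t - e_s` to row `r` only: a triangle inequality
starting at another index has a positive entry as slack, whereas `T_{rjk}` has slack
`2 - (p k - p j)`, which vanishes only for `(j, k) = (s, t)`.
-/

/-- The cone of quasi-semimetrics on an arbitrary index type `ι` with entries in an ordered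
ring `R`; definitionally, `QSM n` is the case `ι = Fin n`, `R = ℝ`. -/
def quasiSemimetricCone (ι R : Type*) [AddMonoid R] [LE R] : Set (ι → ι → R) :=
  {A | (∀ i, A i i = 0) ∧ (∀ i j : ι, i ≠ j → 0 ≤ A i j) ∧
    (∀ i j k : ι, i ≠ j → j ≠ k → i ≠ k → A i k ≤ A i j + A j k)}

section Witnesses

variable {ι : Type*} (R : Type*) [DecidableEq ι] [CommRing R]

/-- The vector `e_a - e_b`, whose coordinate differences single out the ordered pair `(a, b)`. -/
def dipole (a b : ι) : ι → R :=
  Pi.single a 1 - Pi.single b 1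

/-- For `r ≠ s`, a quasi-semimetric satisfying `N_{rs}` exactly and the other defining inequalities
strictly. The diagonal is set to `0` separately, as the formula gives `2` there. -/
def nonnegFacetMatrix (r s : ι) : ι → ι → R :=
  fun i j => if i = j then 0 else 2 - (dipole R r s i - dipole R r s j)

/-- For distinct `r`, `s`, `t`, a quasi-semimetric satisfying `T_{rst}` exactly and the other
defining inequalities strictly. -/
def triangleFacetMatrix (r s t : ι) : ι → ι → R :=
  fun i j => if i = j then 0 else if i = r then 2 + dipole R t s j else 2

section Dipole

variable {R} {a b x y : ι}

theorem dipole_apply_left (hab : a ≠ b) : dipole R a b a = 1 := by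
  simp [dipole, hab]

theorem dipole_apply_right (hab : a ≠ b) : dipole R a b b = -1 := by
  simp [dipole, hab.symm]

theorem dipole_sub_dipole_eq_two (hab : a ≠ b) : dipole R a b a - dipole R a b b = 2 := by
  rw [dipole_apply_left hab, dipole_apply_right hab]
  norm_num

variable [LinearOrder R] [IsStrictOrderedRing R]

theorem dipole_le_one : dipole R a b x ≤ 1 := by
  simp only [dipole, Pi.sub_apply, Pi.single_apply]
  split_ifs <;> norm_num

theorem neg_one_le_dipole : -1 ≤ dipole R a b x := by
  simp only [dipole, Pi.sub_apply, Pi.single_apply]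
  split_ifs <;> norm_num

theorem dipole_nonpos (hx : x ≠ a) : dipole R a b x ≤ 0 := by
  simp only [dipole, Pi.sub_apply, Pi.single_apply, if_neg hx]
  split_ifs <;> norm_num

theorem dipole_nonneg (hx : x ≠ b) : 0 ≤ dipole R a b x := by
  simp only [dipole, Pi.sub_apply, Pi.single_apply, if_neg hx]
  split_ifs <;> norm_num

theorem dipole_sub_dipole_le_two : dipole R a b x - dipole R a b y ≤ 2 := by
  have hx : dipole R a b x ≤ 1 := dipole_le_one
  have hy : -1 ≤ dipole R a b y := neg_one_le_dipole
  linarith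

theorem dipole_sub_dipole_lt_two (hxy : (x, y) ≠ (a, b)) :
    dipole R a b x - dipole R a b y < 2 := by
  obtain hx | hy : x ≠ a ∨ y ≠ b := by simpa [or_iff_not_imp_left] using hxy
  · have hpx : dipole R a b x ≤ 0 := dipole_nonpos hx
    have hpy : -1 ≤ dipole R a b y := neg_one_le_dipole
    linarith
  · have hpx : dipole R a b x ≤ 1 := dipole_le_one
    have hpy : 0 ≤ dipole R a b y := dipole_nonneg hy
    linarith

end Dipole

section NonnegFacet

variable {R} {r s i j k : ι}

theorem nonnegFacetMatrix_self : nonnegFacetMatrix R r s i i = 0 :=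
  if_pos rfl

theorem nonnegFacetMatrix_of_ne (hij : i ≠ j) :
    nonnegFacetMatrix R r s i j = 2 - (dipole R r s i - dipole R r s j) :=
  if_neg hij

theorem nonnegFacetMatrix_apply_eq_zero (hrs : r ≠ s) : nonnegFacetMatrix R r s r s = 0 := by
  rw [nonnegFacetMatrix_of_ne hrs, dipole_sub_dipole_eq_two hrs, sub_self]

variable [LinearOrder R] [IsStrictOrderedRing R]

theorem nonnegFacetMatrix_nonneg (hij : i ≠ j) : 0 ≤ nonnegFacetMatrix R r s i j := by
  rw [nonnegFacetMatrix_of_ne hij]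
  exact sub_nonneg.2 dipole_sub_dipole_le_two

theorem nonnegFacetMatrix_pos (hij : i ≠ j) (hne : (i, j) ≠ (r, s)) :
    0 < nonnegFacetMatrix R r s i j := by
  rw [nonnegFacetMatrix_of_ne hij]
  exact sub_pos.2 (dipole_sub_dipole_lt_two hne)

theorem nonnegFacetMatrix_lt_add (hij : i ≠ j) (hjk : j ≠ k) (hik : i ≠ k) :
    nonnegFacetMatrix R r s i k < nonnegFacetMatrix R r s i j + nonnegFacetMatrix R r s j k := by
  rw [nonnegFacetMatrix_of_ne hij, nonnegFacetMatrix_of_ne hjk, nonnegFacetMatrix_of_ne hik]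
  linarith

theorem nonnegFacetMatrix_mem_quasiSemimetricCone (r s : ι) :
    nonnegFacetMatrix R r s ∈ quasiSemimetricCone ι R :=
  ⟨fun _ => nonnegFacetMatrix_self, fun _ _ => nonnegFacetMatrix_nonneg,
    fun _ _ _ hij hjk hik => (nonnegFacetMatrix_lt_add hij hjk hik).le⟩

end NonnegFacet

section TriangleFacet

variable {R} {r s t i j k : ι}

theorem triangleFacetMatrix_self : triangleFacetMatrix R r s t i i = 0 :=
  if_pos rfl

theorem triangleFacetMatrix_row (hrj : r ≠ j) :
    triangleFacetMatrix R r s t r j = 2 + dipole R t s j :=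
  (if_neg hrj).trans (if_pos rfl)

theorem triangleFacetMatrix_of_ne_row (hij : i ≠ j) (hir : i ≠ r) :
    triangleFacetMatrix R r s t i j = 2 :=
  (if_neg hij).trans (if_neg hir)

theorem triangleFacetMatrix_add_eq (hrs : r ≠ s) (hst : s ≠ t) (hrt : r ≠ t) :
    triangleFacetMatrix R r s t r s + triangleFacetMatrix R r s t s t =
      triangleFacetMatrix R r s t r t := by
  rw [triangleFacetMatrix_row hrs, triangleFacetMatrix_of_ne_row hst hrs.symm,
    triangleFacetMatrix_row hrt, dipole_apply_left hst.symm, dipole_apply_right hst.symm]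
  norm_num

variable [LinearOrder R] [IsStrictOrderedRing R]

theorem triangleFacetMatrix_pos (hij : i ≠ j) : 0 < triangleFacetMatrix R r s t i j := by
  obtain rfl | hir := eq_or_ne i r
  · rw [triangleFacetMatrix_row hij]
    have hpj : -1 ≤ dipole R t s j := neg_one_le_dipole
    linarith
  · rw [triangleFacetMatrix_of_ne_row hij hir]
    exact two_pos

theorem triangleFacetMatrix_row_lt_add (hrj : r ≠ j) (hjk : j ≠ k) (hrk : r ≠ k)
    (hne : (k, j) ≠ (t, s)) :
    triangleFacetMatrix R r s t r k <
      triangleFacetMatrix R r s t r j + triangleFacetMatrix R r s t j k := by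
  rw [triangleFacetMatrix_row hrk, triangleFacetMatrix_row hrj,
    triangleFacetMatrix_of_ne_row hjk hrj.symm]
  have hp : dipole R t s k - dipole R t s j < 2 := dipole_sub_dipole_lt_two hne
  linarith

theorem triangleFacetMatrix_lt_add_of_ne_row (hij : i ≠ j) (hjk : j ≠ k) (hik : i ≠ k)
    (hir : i ≠ r) :
    triangleFacetMatrix R r s t i k <
      triangleFacetMatrix R r s t i j + triangleFacetMatrix R r s t j k := by
  rw [triangleFacetMatrix_of_ne_row hik hir, triangleFacetMatrix_of_ne_row hij hir]
  exact lt_add_of_pos_right 2 (triangleFacetMatrix_pos hjk)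

theorem triangleFacetMatrix_lt_add (hij : i ≠ j) (hjk : j ≠ k) (hik : i ≠ k)
    (hne : (i, j, k) ≠ (r, s, t)) :
    triangleFacetMatrix R r s t i k <
      triangleFacetMatrix R r s t i j + triangleFacetMatrix R r s t j k := by
  obtain rfl | hir := eq_or_ne i r
  · exact triangleFacetMatrix_row_lt_add hij hjk hik (by grind)
  · exact triangleFacetMatrix_lt_add_of_ne_row hij hjk hik hir

theorem triangleFacetMatrix_le_add (hij : i ≠ j) (hjk : j ≠ k) (hik : i ≠ k) :
    triangleFacetMatrix R r s t i k ≤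
      triangleFacetMatrix R r s t i j + triangleFacetMatrix R r s t j k := by
  by_cases h : (i, j, k) = (r, s, t)
  · obtain ⟨rfl, rfl, rfl⟩ : i = r ∧ j = s ∧ k = t := by simpa only [Prod.mk.injEq] using h
    exact (triangleFacetMatrix_add_eq hij hjk hik).ge
  · exact (triangleFacetMatrix_lt_add hij hjk hik h).le

theorem triangleFacetMatrix_mem_quasiSemimetricCone (r s t : ι) :
    triangleFacetMatrix R r s t ∈ quasiSemimetricCone ι R :=
  ⟨fun _ => triangleFacetMatrix_self, fun _ _ hij => (triangleFacetMatrix_pos hij).le,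
    fun _ _ _ => triangleFacetMatrix_le_add⟩

end TriangleFacet

end Witnesses

theorem stmt14_general (ι R : Type*) [CommRing R] [LinearOrder R] [IsStrictOrderedRing R] :
    (∀ r s : ι, r ≠ s → ∃ A ∈ quasiSemimetricCone ι R, A r s = 0 ∧
      (∀ i j : ι, i ≠ j → (i, j) ≠ (r, s) → 0 < A i j) ∧
      (∀ i j k : ι, i ≠ j → j ≠ k → i ≠ k → A i k < A i j + A j k)) ∧
    (∀ r s t : ι, r ≠ s → s ≠ t → r ≠ t → ∃ A ∈ quasiSemimetricCone ι R,
      A r s + A s t = A r t ∧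
      (∀ i j : ι, i ≠ j → 0 < A i j) ∧
      (∀ i j k : ι, i ≠ j → j ≠ k → i ≠ k → (i, j, k) ≠ (r, s, t) →
        A i k < A i j + A j k)) := by
  classical
  constructor
  · intro r s hrs
    exact ⟨nonnegFacetMatrix R r s, nonnegFacetMatrix_mem_quasiSemimetricCone r s,
      nonnegFacetMatrix_apply_eq_zero hrs, fun _ _ => nonnegFacetMatrix_pos,
      fun _ _ _ => nonnegFacetMatrix_lt_add⟩
  · intro r s t hrs hst hrt
    exact ⟨triangleFacetMatrix R r s t, triangleFacetMatrix_mem_quasiSemimetricCone r s t,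
      triangleFacetMatrix_add_eq hrs hst hrt, fun _ _ => triangleFacetMatrix_pos,
      fun _ _ _ => triangleFacetMatrix_lt_add⟩

/-- All nonnegativity and triangle inequalities are facet-defining for `Ê_n`:
(i) for each ordered pair `(r,s)` of distinct indices there is a point of `Ê_n`
satisfying `N_{rs}` exactly and all other defining inequalities strictly;
(ii) for each triple `(r,s,t)` of pairwise distinct indices there is a point of `Ê_n`
satisfying `T_{rst}` exactly and all other defining inequalities strictly. -/
theorem stmt14 (n : ℕ) (hn : 3 ≤ n) :
    (∀ r s : Fin n, r ≠ s → ∃ A ∈ QSM n, A r s = 0 ∧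
      (∀ i j : Fin n, i ≠ j → (i, j) ≠ (r, s) → 0 < A i j) ∧
      (∀ i j k : Fin n, i ≠ j → j ≠ k → i ≠ k → A i k < A i j + A j k)) ∧
    (∀ r s t : Fin n, r ≠ s → s ≠ t → r ≠ t → ∃ A ∈ QSM n,
      A r s + A s t = A r t ∧
      (∀ i j : Fin n, i ≠ j → 0 < A i j) ∧
      (∀ i j k : Fin n, i ≠ j → j ≠ k → i ≠ k → (i, j, k) ≠ (r, s, t) →
        A i k < A i j + A j k)) :=
  stmt14_general (Fin n) ℝ
end

section
/- Let n ≥ 3 and let A ∈ Ê_n be nonzero. Then s(A) ≥ n − 1, where s(A) is the number of ordered pairs (i,j) with i ≠ j and A_{ij} ≠ 0. Moreover, if s(A) = n − 1, then there exist a real number c > 0 and an index r ∈ Fin n such that A = c · R^(r) or A = c · C^(r). -/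
/-- The line `R^(r)`: all ones on row `r` off the diagonal, zero elsewhere. -/
def lineR (n : ℕ) (r : Fin n) : Fin n → Fin n → ℝ :=
  fun i j => if i = r ∧ j ≠ r then 1 else 0

/-- The line `C^(r)`: all ones on column `r` off the diagonal, zero elsewhere. -/
def lineC (n : ℕ) (r : Fin n) : Fin n → Fin n → ℝ :=
  fun i j => if j = r ∧ i ≠ r then 1 else 0

/-- `s(A)`: the number of nonzero off-diagonal entries of `A`. -/
noncomputable def sCount (n : ℕ) (A : Fin n → Fin n → ℝ) : ℕ :=
  (Finset.univ.filter fun p : Fin n × Fin n => p.1 ≠ p.2 ∧ A p.1 p.2 ≠ 0).card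

/-!
Vanishing of a quasi-semimetric `d` on `n` points is a transitive relation. Hence, for a point
`a`, the set `S = {k | d a k = 0}` admits no zero of `d` from `S` to `Sᶜ`: a zero `d i j = 0` with
`i ∈ S` would put `j` in `S`. If `d a b ≠ 0`, then `a ∈ S` and `b ∉ S`, so `d` has at least
`|S| |Sᶜ| ≥ n - 1` nonzero entries. Equality forces `S` or `Sᶜ` to be a singleton and `d` to
vanish off `S ×ˢ Sᶜ`, and then the triangle inequality makes `d` constant on `S ×ˢ Sᶜ`.
-/

open Function

section Cuts

variable {ι : Type*}

/-- The quasi-semimetric of the cut `(S, Sᶜ)` with weight `c`: the distance is `c` from a point of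
`S` to a point outside `S`, and `0` otherwise. The lines `R^(r)` and `C^(r)` are the cuts of
weight `1` given by `{r}` and `{r}ᶜ`. -/
noncomputable def orientedCut {M : Type*} [Zero M] (S : Set ι) (c : M) : ι → ι → M :=
  curry ((S ×ˢ Sᶜ).indicator fun _ => c)

theorem card_sub_one_le_ncard_prod_compl [Finite ι] {S : Set ι} (hS : S.Nonempty)
    (hSc : Sᶜ.Nonempty) : Nat.card ι - 1 ≤ (S ×ˢ Sᶜ).ncard := by
  rw [← S.ncard_add_ncard_compl, Set.ncard_prod]
  exact Nat.add_sub_one_le_mul hS.ncard_pos.ne' hSc.ncard_pos.ne'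

theorem eq_singleton_or_eq_compl_singleton_of_ncard_prod_compl [Finite ι] {S : Set ι}
    (hS : S.Nonempty) (hSc : Sᶜ.Nonempty) (hcard : (S ×ˢ Sᶜ).ncard = Nat.card ι - 1) :
    ∃ r, S = {r} ∨ S = {r}ᶜ := by
  rw [← S.ncard_add_ncard_compl, Set.ncard_prod] at hcard
  obtain ⟨p, hp⟩ := Nat.exists_eq_succ_of_ne_zero hS.ncard_pos.ne'
  obtain ⟨q, hq⟩ := Nat.exists_eq_succ_of_ne_zero hSc.ncard_pos.ne'
  have hpq : p * q = 0 := by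
    rw [hp, hq, Nat.succ_mul_succ] at hcard
    lia
  rcases Nat.mul_eq_zero.mp hpq with rfl | rfl
  · obtain ⟨r, hr⟩ := Set.ncard_eq_one.mp hp
    exact ⟨r, .inl hr⟩
  · obtain ⟨r, hr⟩ := Set.ncard_eq_one.mp hq
    exact ⟨r, .inr (compl_eq_comm.mp hr).symm⟩

end Cuts

section QuasiSemimetrics

variable {ι M : Type*} [AddZeroClass M] [PartialOrder M] {d : ι → ι → M}

/-- A quasi-semimetric on `ι` with values in `M`: a distance that need not be symmetric and may
vanish between distinct points. The axioms are imposed on all points, distinct or not; for real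
matrices this agrees with membership in `QSM`. -/
structure IsQuasiSemimetric (d : ι → ι → M) : Prop where
  self : ∀ i, d i i = 0
  nonneg : ∀ i j, 0 ≤ d i j
  triangle : ∀ i j k, d i k ≤ d i j + d j k

namespace IsQuasiSemimetric

theorem eq_zero_trans (hd : IsQuasiSemimetric d) {i j k : ι} (hij : d i j = 0)
    (hjk : d j k = 0) : d i k = 0 := by
  refine le_antisymm ?_ (hd.nonneg i k)
  simpa only [hij, hjk, add_zero] using hd.triangle i j k

theorem prod_compl_subset_support (hd : IsQuasiSemimetric d) (a : ι) :
    {k | d a k = 0} ×ˢ {k | d a k = 0}ᶜ ⊆ support (uncurry d) :=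
  fun _ ⟨hi, hj⟩ hij => hj (hd.eq_zero_trans hi hij)

theorem le_of_support_subset_prod_compl (hd : IsQuasiSemimetric d) {S : Set ι}
    (hS : support (uncurry d) ⊆ S ×ˢ Sᶜ) {i i' j j' : ι} (hi' : i' ∈ S) (hj' : j' ∉ S) :
    d i j ≤ d i' j' := by
  have hzero_right : d i i' = 0 := by
    by_contra h
    exact (@hS (i, i') h).2 hi'
  have hzero_left : d j' j = 0 := by
    by_contra h
    exact hj' (@hS (j', j) h).1
  calc
    d i j ≤ d i i' + d i' j := hd.triangle i i' j
    _ = d i' j := by rw [hzero_right, zero_add]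
    _ ≤ d i' j' + d j' j := hd.triangle i' j' j
    _ = d i' j' := by rw [hzero_left, add_zero]

theorem eq_orientedCut_of_support_subset (hd : IsQuasiSemimetric d) {S : Set ι}
    (hS : support (uncurry d) ⊆ S ×ˢ Sᶜ) {a b : ι} (ha : a ∈ S) (hb : b ∉ S) :
    d = orientedCut S (d a b) := by
  ext i j
  by_cases hij : (i, j) ∈ S ×ˢ Sᶜ
  · rw [orientedCut, curry_apply, Set.indicator_of_mem hij]
    exact le_antisymm (hd.le_of_support_subset_prod_compl hS ha hb)
      (hd.le_of_support_subset_prod_compl hS hij.1 hij.2)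
  · rw [orientedCut, curry_apply, Set.indicator_of_notMem hij]
    exact notMem_support.mp (mt (@hS (i, j)) hij)

end IsQuasiSemimetric

theorem stmt15_general [Finite ι] (hd : IsQuasiSemimetric d) (hd0 : d ≠ 0) :
    Nat.card ι - 1 ≤ (support (uncurry d)).ncard ∧
    ((support (uncurry d)).ncard = Nat.card ι - 1 →
      ∃ c : M, 0 < c ∧ ∃ r : ι, d = orientedCut {r} c ∨ d = orientedCut {r}ᶜ c) := by
  obtain ⟨a, b, hab⟩ : ∃ a b, d a b ≠ 0 := by
    obtain ⟨a, ha⟩ := Function.ne_iff.mp hd0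
    exact ⟨a, Function.ne_iff.mp ha⟩
  set S : Set ι := {k | d a k = 0}
  have ha : a ∈ S := hd.self a
  have hb : b ∉ S := hab
  have hsub : S ×ˢ Sᶜ ⊆ support (uncurry d) := hd.prod_compl_subset_support a
  have hle : Nat.card ι - 1 ≤ (S ×ˢ Sᶜ).ncard := card_sub_one_le_ncard_prod_compl ⟨a, ha⟩ ⟨b, hb⟩
  refine ⟨hle.trans (Set.ncard_le_ncard hsub), fun hcard => ?_⟩
  have hsupp : S ×ˢ Sᶜ = support (uncurry d) :=
    Set.eq_of_subset_of_ncard_le hsub (hcard.trans_le hle)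
  have hcut : d = orientedCut S (d a b) := hd.eq_orientedCut_of_support_subset hsupp.ge ha hb
  obtain ⟨r, hr⟩ := eq_singleton_or_eq_compl_singleton_of_ncard_prod_compl ⟨a, ha⟩ ⟨b, hb⟩
    (hsupp ▸ hcard)
  refine ⟨d a b, (hd.nonneg a b).lt_of_ne' hab, r, hr.imp (fun h => ?_) (fun h => ?_)⟩ <;>
    rwa [← h]

end QuasiSemimetrics

section RealMatrices

variable {n : ℕ}

theorem isQuasiSemimetric_of_mem_QSM {A : Fin n → Fin n → ℝ} (hA : A ∈ QSM n) :
    IsQuasiSemimetric A := by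
  obtain ⟨hself, hnonneg, htriangle⟩ := hA
  have hnonneg' : ∀ i j, 0 ≤ A i j := fun i j => by
    rcases eq_or_ne i j with rfl | hij
    · exact (hself i).ge
    · exact hnonneg i j hij
  refine ⟨hself, hnonneg', fun i j k => ?_⟩
  rcases eq_or_ne i j with rfl | hij
  · rw [hself, zero_add]
  rcases eq_or_ne j k with rfl | hjk
  · rw [hself, add_zero]
  rcases eq_or_ne i k with rfl | hik
  · rw [hself]
    exact add_nonneg (hnonneg' i j) (hnonneg' j i)
  · exact htriangle i j k hij hjk hik

theorem sCount_eq_ncard_support {A : Fin n → Fin n → ℝ} (hself : ∀ i, A i i = 0) :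
    sCount n A = (support (uncurry A)).ncard := by
  rw [sCount, ← Set.ncard_coe_finset]
  congr 1
  ext ⟨i, j⟩
  have hne : A i j ≠ 0 → i ≠ j := by
    rintro h rfl
    exact h (hself i)
  simpa using hne

theorem smul_lineR (c : ℝ) (r : Fin n) : c • lineR n r = orientedCut {r} c := by
  ext i j
  simp [lineR, orientedCut, Set.indicator_apply]

theorem smul_lineC (c : ℝ) (r : Fin n) : c • lineC n r = orientedCut {r}ᶜ c := by
  ext i j
  simp [lineC, orientedCut, Set.indicator_apply, and_comm]

end RealMatrices

/-- A nonzero quasi-semimetric has at least `n - 1` nonzero entries, and if it has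
exactly `n - 1` nonzero entries then it is a positive multiple of a line. -/
theorem stmt15 (n : ℕ) (hn : 3 ≤ n) (A : Fin n → Fin n → ℝ)
    (hA : A ∈ QSM n) (hA0 : A ≠ 0) :
    n - 1 ≤ sCount n A ∧
    (sCount n A = n - 1 →
      ∃ c : ℝ, 0 < c ∧ ∃ r : Fin n, A = c • lineR n r ∨ A = c • lineC n r) := by
  simpa only [sCount_eq_ncard_support hA.1, smul_lineR, smul_lineC, Nat.card_fin]
    using stmt15_general (isQuasiSemimetric_of_mem_QSM hA) hA0
end

section
/- Let n ≥ 3 and fix distinct i, j ∈ Fin n. Suppose a defining inequality F of Ê_n (so F is either a nonnegativity inequality N_{kl} with k ≠ l, or a triangle inequality T_{pqr} with p, q, r pairwise distinct) is satisfied exactly by precisely the same set of lines as N_{ij}, namely by every line L ∈ L_n except R^(i) and C^(j). Then F is the inequality N_{ij}. (The set of lines L for which L_{ij} = 0 determines N_{ij} among all defining inequalities.) -/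
/-- The set `L_n` of the `2n` lines. -/
def Lines (n : ℕ) : Set (Fin n → Fin n → ℝ) :=
  Set.range (lineR n) ∪ Set.range (lineC n)

/-!
Every line satisfies every defining inequality, so what matters is where an inequality is strict.
On the lines, `N_{kl}` is strict exactly at `R^(k)` and `C^(l)`, whereas `T_{pqr}` is strict exactly
at `R^(q)` and `C^(q)`, both indexed by the middle point. Strictness at `R^(i)` and `C^(j)` thus
forces `k = i` and `l = j` in the first case and the contradiction `i = q = j` in the second.
-/

section Lines

variable {n : ℕ} {r : Fin n}

theorem lineR_mem_Lines (r : Fin n) : lineR n r ∈ Lines n := Or.inl ⟨r, rfl⟩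

theorem lineC_mem_Lines (r : Fin n) : lineC n r ∈ Lines n := Or.inr ⟨r, rfl⟩

theorem lineC_apply (r k l : Fin n) : lineC n r k l = lineR n r l k := rfl

theorem lineR_apply_of_ne {k l : Fin n} (hkl : k ≠ l) :
    lineR n r k l = if k = r then 1 else 0 := by
  have hcond : (k = r ∧ l ≠ r) ↔ k = r :=
    and_iff_left_of_imp fun hk hl => hkl (hk.trans hl.symm)
  simp only [lineR, hcond]

theorem lineR_apply_ne_zero_iff {k l : Fin n} (hkl : k ≠ l) : lineR n r k l ≠ 0 ↔ k = r := by
  simp [lineR_apply_of_ne hkl]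

theorem lineC_apply_ne_zero_iff {k l : Fin n} (hkl : k ≠ l) : lineC n r k l ≠ 0 ↔ l = r :=
  lineR_apply_ne_zero_iff hkl.symm

theorem lineR_triangle_ne_iff {p q s : Fin n} (hpq : p ≠ q) (hqs : q ≠ s) (hps : p ≠ s) :
    lineR n r p q + lineR n r q s ≠ lineR n r p s ↔ q = r := by
  have hrow : lineR n r p q = lineR n r p s := by
    rw [lineR_apply_of_ne hpq, lineR_apply_of_ne hps]
  rw [hrow, Ne, add_eq_left, ← Ne, lineR_apply_ne_zero_iff hqs]

theorem lineC_triangle_ne_iff {p q s : Fin n} (hpq : p ≠ q) (hqs : q ≠ s) (hps : p ≠ s) :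
    lineC n r p q + lineC n r q s ≠ lineC n r p s ↔ q = r := by
  simp only [lineC_apply]
  rw [add_comm, lineR_triangle_ne_iff hqs.symm hpq.symm hps.symm]

end Lines

/-- If a defining inequality of `Ê_n` (a nonnegativity inequality `N_{kl}` or a
triangle inequality `T_{pqr}`) is satisfied exactly by precisely the lines other than
`R^(i)` and `C^(j)`, then it is the inequality `N_{ij}`. -/
theorem stmt16 (n : ℕ) (hn : 3 ≤ n) (i j : Fin n) (hij : i ≠ j) :
    (∀ k l : Fin n, k ≠ l →
      (∀ L ∈ Lines n, (L k l = 0 ↔ (L ≠ lineR n i ∧ L ≠ lineC n j))) →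
      k = i ∧ l = j) ∧
    (∀ p q r : Fin n, p ≠ q → q ≠ r → p ≠ r →
      ¬ (∀ L ∈ Lines n, (L p q + L q r = L p r ↔ (L ≠ lineR n i ∧ L ≠ lineC n j)))) := by
  refine ⟨fun k l hkl h => ?_, fun p q r hpq hqr hpr h => ?_⟩
  · have hR : lineR n i k l ≠ 0 := fun h0 => ((h _ (lineR_mem_Lines i)).1 h0).1 rfl
    have hC : lineC n j k l ≠ 0 := fun h0 => ((h _ (lineC_mem_Lines j)).1 h0).2 rfl
    exact ⟨(lineR_apply_ne_zero_iff hkl).1 hR, (lineC_apply_ne_zero_iff hkl).1 hC⟩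
  · have hR : lineR n i p q + lineR n i q r ≠ lineR n i p r :=
      fun h0 => ((h _ (lineR_mem_Lines i)).1 h0).1 rfl
    have hC : lineC n j p q + lineC n j q r ≠ lineC n j p r :=
      fun h0 => ((h _ (lineC_mem_Lines j)).1 h0).2 rfl
    have hqi : q = i := (lineR_triangle_ne_iff hpq hqr hpr).1 hR
    have hqj : q = j := (lineC_triangle_ne_iff hpq hqr hpr).1 hC
    exact hij (hqi.symm.trans hqj)
end

section
/- Let n ≥ 3 and A ∈ Ê_n. Let s(A) be the number of ordered pairs (i,j) with i ≠ j and A_{ij} > 0, and let p(A) be the number of unordered pairs {i,j} of distinct indices such that A_{ij} > 0 or A_{ji} > 0. Then the total number of defining inequalities of Ê_n that A satisfies strictly — that is, the number of ordered pairs (i,j), i ≠ j, with A_{ij} > 0, plus the number of triples (i,j,k) of pairwise distinct indices with A_{ij} + A_{jk} > A_{ik} — is at least (n − 2)·p(A) + s(A). -/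
/-- The number of defining inequalities of `Ê_n` satisfied strictly by `A`:
strict nonnegativity inequalities plus strict triangle inequalities. -/
noncomputable def strCount (n : ℕ) (A : Fin n → Fin n → ℝ) : ℕ :=
  (Finset.univ.filter fun p : Fin n × Fin n => p.1 ≠ p.2 ∧ 0 < A p.1 p.2).card +
  (Finset.univ.filter fun t : Fin n × Fin n × Fin n =>
    t.1 ≠ t.2.1 ∧ t.2.1 ≠ t.2.2 ∧ t.1 ≠ t.2.2 ∧
      A t.1 t.2.2 < A t.1 t.2.1 + A t.2.1 t.2.2).card

/-- `s(A)`: the number of ordered pairs `(i,j)`, `i ≠ j`, with `A i j > 0`. -/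
noncomputable def sPos (n : ℕ) (A : Fin n → Fin n → ℝ) : ℕ :=
  (Finset.univ.filter fun p : Fin n × Fin n => p.1 ≠ p.2 ∧ 0 < A p.1 p.2).card

/-- `p(A)`: the number of unordered pairs `{i,j}` of distinct indices such that
`A i j > 0` or `A j i > 0`. -/
noncomputable def pCount (n : ℕ) (A : Fin n → Fin n → ℝ) : ℕ :=
  (Finset.univ.filter fun p : Fin n × Fin n =>
    p.1 < p.2 ∧ (0 < A p.1 p.2 ∨ 0 < A p.2 p.1)).card

/-!
The left-hand sides of the triangle inequalities `T_{kij}` and `T_{kji}` add up to `A i j + A j i`.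
If one of these two entries is positive, then for each of the `n - 2` indices `k ≠ i, j` at least
one of the two inequalities is strict. Inequalities obtained from different unordered pairs `{i, j}`
are different, because `{i, j}` consists of the last two indices of the inequality.
-/

section StrictTriangles

open Finset

variable {V G : Type*} [AddCommMonoid G] [LinearOrder G]

theorem lt_add_or_lt_add_of_add_pos [IsOrderedCancelAddMonoid G] {A : V → V → G} {i j : V}
    (h : 0 < A i j + A j i) (k : V) : A k j < A k i + A i j ∨ A k i < A k j + A j i := by
  contrapose! h
  refine (add_le_iff_nonpos_right (A k i)).mp ?_
  calc A k i + (A i j + A j i) = A k i + A i j + A j i := (add_assoc _ _ _).symm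
    _ ≤ A k j + A j i := by gcongr; exact h.1
    _ ≤ A k i := h.2

variable [Fintype V]

/-- The positions `(i, j)`, `i ≠ j`, of the positive off-diagonal entries of `A`, so that `s(A)` is
its cardinality. -/
def posEntries [DecidableEq V] (A : V → V → G) : Finset (V × V) :=
  {p | p.1 ≠ p.2 ∧ 0 < A p.1 p.2}

/-- The unordered pairs `{i, j}`, `i ≠ j`, with `A i j > 0` or `A j i > 0`, obtained from the
positive entries by forgetting the order of the indices. Its cardinality is `p(A)`. -/
def posPairs [DecidableEq V] (A : V → V → G) : Finset (Sym2 V) :=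
  (posEntries A).image fun p => s(p.1, p.2)

/-- The triples `(i, j, k)` of pairwise distinct indices for which the triangle inequality
`T_{ijk}` holds strictly. -/
def strictTriangles [DecidableEq V] (A : V → V → G) : Finset (V × V × V) :=
  {t | t.1 ≠ t.2.1 ∧ t.2.1 ≠ t.2.2 ∧ t.1 ≠ t.2.2 ∧ A t.1 t.2.2 < A t.1 t.2.1 + A t.2.1 t.2.2}

theorem mk_mem_posPairs [DecidableEq V] {A : V → V → G} {i j : V} :
    s(i, j) ∈ posPairs A ↔ i ≠ j ∧ (0 < A i j ∨ 0 < A j i) := by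
  simp only [posPairs, posEntries, mem_image, mem_filter_univ, Prod.exists, Sym2.eq_iff]
  grind

theorem mk_mem_strictTriangles [DecidableEq V] {A : V → V → G} {i j k : V} :
    (i, j, k) ∈ strictTriangles A ↔ i ≠ j ∧ j ≠ k ∧ i ≠ k ∧ A i k < A i j + A j k := by
  simp only [strictTriangles, mem_filter_univ]

theorem card_posPairs [LinearOrder V] (A : V → V → G) :
    #(posPairs A) = #{p : V × V | p.1 < p.2 ∧ (0 < A p.1 p.2 ∨ 0 < A p.2 p.1)} := by
  symm
  refine card_nbij (fun p => s(p.1, p.2)) ?mapsTo ?injOn ?surjOn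
  case mapsTo =>
    rintro ⟨i, j⟩ hp
    obtain ⟨hlt, hpos⟩ := (mem_filter_univ _).mp hp
    exact mk_mem_posPairs.mpr ⟨hlt.ne, hpos⟩
  case injOn =>
    rintro ⟨i, j⟩ hp ⟨i', j'⟩ hq heq
    have hlt : i < j := ((mem_filter_univ _).mp hp).1
    have hlt' : i' < j' := ((mem_filter_univ _).mp hq).1
    rcases Sym2.eq_iff.mp heq with ⟨rfl, rfl⟩ | ⟨rfl, rfl⟩
    · rfl
    · exact absurd hlt hlt'.asymm
  case surjOn =>
    intro e he
    induction e with | h i j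
    obtain ⟨hij, hpos⟩ := mk_mem_posPairs.mp he
    rcases hij.lt_or_gt with hlt | hlt
    · exact ⟨(i, j), (mem_filter_univ _).mpr ⟨hlt, hpos⟩, rfl⟩
    · exact ⟨(j, i), (mem_filter_univ _).mpr ⟨hlt, hpos.symm⟩, Sym2.eq_swap⟩

variable [DecidableEq V] [IsOrderedCancelAddMonoid G] {A : V → V → G}

theorem card_sub_two_le_card_filter_strictTriangles {i j : V} (hij : i ≠ j)
    (h : 0 < A i j + A j i) :
    Fintype.card V - 2 ≤ #{t ∈ strictTriangles A | s(t.2.1, t.2.2) = s(i, j)} := by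
  rw [← card_pair hij, ← card_compl]
  refine card_le_card_of_surjOn Prod.fst fun k hk => ?_
  obtain ⟨hki, hkj⟩ : k ≠ i ∧ k ≠ j := by simpa [and_comm] using hk
  rcases lt_add_or_lt_add_of_add_pos h k with hlt | hlt
  · exact ⟨(k, i, j), mem_filter.mpr ⟨mk_mem_strictTriangles.mpr ⟨hki, hij, hkj, hlt⟩, rfl⟩, rfl⟩
  · exact ⟨(k, j, i),
      mem_filter.mpr ⟨mk_mem_strictTriangles.mpr ⟨hkj, hij.symm, hki, hlt⟩, Sym2.eq_swap⟩, rfl⟩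

theorem card_sub_two_mul_card_posPairs_le (hA : ∀ i j, i ≠ j → 0 ≤ A i j) :
    (Fintype.card V - 2) * #(posPairs A) ≤ #(strictTriangles A) := by
  have hfiber : ∀ e ∈ posPairs A,
      Fintype.card V - 2 ≤ #{t ∈ strictTriangles A | s(t.2.1, t.2.2) = e} := by
    intro e he
    induction e with | h i j
    obtain ⟨hij, hpos⟩ := mk_mem_posPairs.mp he
    refine card_sub_two_le_card_filter_strictTriangles hij ?_
    rcases hpos with hpos | hpos
    · exact add_pos_of_pos_of_nonneg hpos (hA j i hij.symm)
    · exact add_pos_of_nonneg_of_pos (hA i j hij) hpos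
  calc (Fintype.card V - 2) * #(posPairs A)
      = #(posPairs A) • (Fintype.card V - 2) := mul_comm _ _
    _ ≤ ∑ e ∈ posPairs A, #{t ∈ strictTriangles A | s(t.2.1, t.2.2) = e} :=
      card_nsmul_le_sum _ _ _ hfiber
    _ = #{t ∈ strictTriangles A | s(t.2.1, t.2.2) ∈ posPairs A} :=
      sum_card_fiberwise_eq_card_filter _ _ _
    _ ≤ #(strictTriangles A) := card_filter_le _ _

theorem stmt17_general (hA : ∀ i j, i ≠ j → 0 ≤ A i j) :
    (Fintype.card V - 2) * #(posPairs A) + #(posEntries A) ≤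
      #(posEntries A) + #(strictTriangles A) := by
  rw [add_comm]
  exact Nat.add_le_add_left (card_sub_two_mul_card_posPairs_le hA) _

end StrictTriangles

/-- Any `A ∈ Ê_n` satisfies at least `(n-2)·p(A) + s(A)` defining inequalities
strictly. -/
theorem stmt17 (n : ℕ) (hn : 3 ≤ n) (A : Fin n → Fin n → ℝ) (hA : A ∈ QSM n) :
    (n - 2) * pCount n A + sPos n A ≤ strCount n A := by
  simpa only [Fintype.card_fin, card_posPairs] using! stmt17_general hA.2.1
end

section
/- Let n ≥ 3. For two matrices A, B ∈ Ê_n, let c(A,B) denote the number of defining inequalities of Ê_n that both A and B satisfy exactly, i.e., the number of ordered pairs (i,j), i ≠ j, with A_{ij} = 0 and B_{ij} = 0, plus the number of triples (i,j,k) of pairwise distinct indices with A_{ij} + A_{jk} = A_{ik} and B_{ij} + B_{jk} = B_{ik}. Then for all distinct r, s ∈ Fin n: c(R^(r), R^(s)) = (n−1)²(n−2), c(C^(r), C^(s)) = (n−1)²(n−2), c(R^(r), C^(s)) = (n−1)²(n−2) + 1, and c(R^(r), C^(r)) = n(n−1)(n−2). (Consequently every combinatorial automorphism of Ê_n preserves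 both the partition of L_n into rows and columns and the partition into the pairs {R^(i), C^(i)}.) -/
/-- `c(A,B)`: the number of defining inequalities of `Ê_n` satisfied exactly by both
`A` and `B` (exact nonnegativity inequalities plus exact triangle inequalities). -/
noncomputable def cCount (n : ℕ) (A B : Fin n → Fin n → ℝ) : ℕ :=
  (Finset.univ.filter fun p : Fin n × Fin n =>
    p.1 ≠ p.2 ∧ A p.1 p.2 = 0 ∧ B p.1 p.2 = 0).card +
  (Finset.univ.filter fun t : Fin n × Fin n × Fin n =>
    t.1 ≠ t.2.1 ∧ t.2.1 ≠ t.2.2 ∧ t.1 ≠ t.2.2 ∧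
      A t.1 t.2.1 + A t.2.1 t.2.2 = A t.1 t.2.2 ∧
      B t.1 t.2.1 + B t.2.1 t.2.2 = B t.1 t.2.2).card

/-!
For distinct indices, a row `R^(r)` vanishes at `(i, j)` exactly when `i ≠ r`, a column `C^(r)`
exactly when `j ≠ r`, and either line makes the triangle inequality `T_{ijk}` an equality exactly
when the middle index `j` is not `r`. So for two lines the common exact nonnegativity inequalities
are the off-diagonal points of a rectangle `S ×ˢ T`, numbering `#S * #T - #(S ∩ T)`, and the
common exact triangle inequalities are the triples of distinct indices with middle index in a set
`U`, numbering `#U * (n - 1) * (n - 2)`.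
-/

section Counting

open Finset

variable {α : Type*} [DecidableEq α]

lemma card_filter_product_ne_add_card_inter (S T : Finset α) :
    #{p ∈ S ×ˢ T | p.1 ≠ p.2} + #(S ∩ T) = #S * #T := by
  have diagonal : {p ∈ S ×ˢ T | ¬p.1 ≠ p.2} = (S ∩ T).diag := by
    ext ⟨i, j⟩
    simp only [mem_filter, mem_product, mem_diag, mem_inter]
    grind
  rw [← diag_card (S ∩ T), ← diagonal, card_filter_add_card_filter_not, card_product]

variable [Fintype α]

lemma card_compl_pair {a b : α} (h : a ≠ b) :
    #({a, b}ᶜ : Finset α) = Fintype.card α - 2 := by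
  rw [card_compl, card_pair h]

lemma card_offDiag_compl_singleton (a : α) :
    #({a}ᶜ : Finset α).offDiag = (Fintype.card α - 1) * (Fintype.card α - 2) := by
  rw [offDiag_card, card_compl, card_singleton, ← Nat.mul_sub_one, Nat.sub_sub]

lemma card_distinct_triples_middle_mem (S : Finset α) :
    #{t : α × α × α | t.1 ≠ t.2.1 ∧ t.2.1 ≠ t.2.2 ∧ t.1 ≠ t.2.2 ∧ t.2.1 ∈ S} =
      #S * ((Fintype.card α - 1) * (Fintype.card α - 2)) := by
  calc
    _ = #(S.sigma fun j => ({j}ᶜ : Finset α).offDiag) := by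
      refine card_nbij' (fun t => ⟨t.2.1, t.1, t.2.2⟩) (fun t => (t.2.1, t.1, t.2.2))
        ?_ ?_ (fun _ _ => rfl) (fun _ _ => rfl)
      · rintro ⟨i, j, k⟩ h
        simp only [coe_filter, mem_univ, true_and, Set.mem_ofPred_eq, mem_coe, mem_sigma,
          mem_offDiag, mem_compl, mem_singleton] at h ⊢
        tauto
      · rintro ⟨j, i, k⟩ h
        simp only [coe_filter, mem_univ, true_and, Set.mem_ofPred_eq, mem_coe, mem_sigma,
          mem_offDiag, mem_compl, mem_singleton] at h ⊢
        tauto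
    _ = _ := by simp only [card_sigma, card_offDiag_compl_singleton, sum_const, smul_eq_mul]

end Counting

section Lines

variable {n : ℕ} {i j k : Fin n}

lemma lineC_apply_eq_lineR_swap (r i j : Fin n) : lineC n r i j = lineR n r j i :=
  rfl

lemma lineR_eq_zero_iff (r : Fin n) (hij : i ≠ j) : lineR n r i j = 0 ↔ i ≠ r := by
  unfold lineR
  grind

lemma lineC_eq_zero_iff (r : Fin n) (hij : i ≠ j) : lineC n r i j = 0 ↔ j ≠ r := by
  rw [lineC_apply_eq_lineR_swap, lineR_eq_zero_iff r hij.symm]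

lemma lineR_triangle_eq_iff (r : Fin n) (hij : i ≠ j) (hjk : j ≠ k) (hik : i ≠ k) :
    lineR n r i j + lineR n r j k = lineR n r i k ↔ j ≠ r := by
  unfold lineR
  grind

lemma lineC_triangle_eq_iff (r : Fin n) (hij : i ≠ j) (hjk : j ≠ k) (hik : i ≠ k) :
    lineC n r i j + lineC n r j k = lineC n r i k ↔ j ≠ r := by
  simp only [lineC_apply_eq_lineR_swap]
  rw [add_comm, lineR_triangle_eq_iff r hjk.symm hij.symm hik.symm]

end Lines

section CommonFacets

open Finset

variable {n : ℕ} {r s : Fin n}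

lemma cCount_add_card_inter {A B : Fin n → Fin n → ℝ} {S T U : Finset (Fin n)}
    (hzero : ∀ {i j}, i ≠ j → (A i j = 0 ∧ B i j = 0 ↔ i ∈ S ∧ j ∈ T))
    (htriangle : ∀ {i j k}, i ≠ j → j ≠ k → i ≠ k →
      (A i j + A j k = A i k ∧ B i j + B j k = B i k ↔ j ∈ U)) :
    cCount n A B + #(S ∩ T) = #S * #T + #U * ((n - 1) * (n - 2)) := by
  have pairs : ({p | p.1 ≠ p.2 ∧ A p.1 p.2 = 0 ∧ B p.1 p.2 = 0} : Finset (Fin n × Fin n)) =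
      {p ∈ S ×ˢ T | p.1 ≠ p.2} := by
    ext ⟨i, j⟩
    simp only [mem_filter, mem_univ, true_and, mem_product]
    rw [and_congr_right hzero, and_comm]
  have triples : ({t : Fin n × Fin n × Fin n | t.1 ≠ t.2.1 ∧ t.2.1 ≠ t.2.2 ∧ t.1 ≠ t.2.2 ∧
        A t.1 t.2.1 + A t.2.1 t.2.2 = A t.1 t.2.2 ∧
        B t.1 t.2.1 + B t.2.1 t.2.2 = B t.1 t.2.2} : Finset _) =
      ({t : Fin n × Fin n × Fin n | t.1 ≠ t.2.1 ∧ t.2.1 ≠ t.2.2 ∧ t.1 ≠ t.2.2 ∧ t.2.1 ∈ U} :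
        Finset _) :=
    filter_congr fun _ _ => and_congr_right fun hij => and_congr_right fun hjk =>
      and_congr_right fun hik => htriangle hij hjk hik
  rw [cCount, pairs, triples, add_right_comm, card_filter_product_ne_add_card_inter,
    card_distinct_triples_middle_mem, Fintype.card_fin]

lemma cCount_lineR_lineR (hrs : r ≠ s) :
    cCount n (lineR n r) (lineR n s) = (n - 1) ^ 2 * (n - 2) := by
  have count := cCount_add_card_inter (A := lineR n r) (B := lineR n s)
    (S := {r, s}ᶜ) (T := univ) (U := {r, s}ᶜ)
    (fun hij => by simp [lineR_eq_zero_iff _ hij])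
    (fun hij hjk hik => by simp [lineR_triangle_eq_iff _ hij hjk hik])
  rw [inter_univ, card_compl_pair hrs, card_univ, Fintype.card_fin] at count
  obtain ⟨m, rfl⟩ := Nat.exists_eq_add_of_le' (Fin.nontrivial_iff_two_le.mp ⟨r, s, hrs⟩)
  simp only [Nat.add_sub_cancel, Nat.add_one_sub_one] at count ⊢
  linarith

lemma cCount_lineC_lineC (hrs : r ≠ s) :
    cCount n (lineC n r) (lineC n s) = (n - 1) ^ 2 * (n - 2) := by
  have count := cCount_add_card_inter (A := lineC n r) (B := lineC n s)
    (S := univ) (T := {r, s}ᶜ) (U := {r, s}ᶜ)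
    (fun hij => by simp [lineC_eq_zero_iff _ hij])
    (fun hij hjk hik => by simp [lineC_triangle_eq_iff _ hij hjk hik])
  rw [univ_inter, card_compl_pair hrs, card_univ, Fintype.card_fin] at count
  obtain ⟨m, rfl⟩ := Nat.exists_eq_add_of_le' (Fin.nontrivial_iff_two_le.mp ⟨r, s, hrs⟩)
  simp only [Nat.add_sub_cancel, Nat.add_one_sub_one] at count ⊢
  linarith

lemma cCount_lineR_lineC (hrs : r ≠ s) :
    cCount n (lineR n r) (lineC n s) = (n - 1) ^ 2 * (n - 2) + 1 := by
  have count := cCount_add_card_inter (A := lineR n r) (B := lineC n s)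
    (S := {r}ᶜ) (T := {s}ᶜ) (U := {r, s}ᶜ)
    (fun hij => by simp [lineR_eq_zero_iff _ hij, lineC_eq_zero_iff _ hij])
    (fun hij hjk hik => by
      simp [lineR_triangle_eq_iff _ hij hjk hik, lineC_triangle_eq_iff _ hij hjk hik])
  rw [← compl_union, ← insert_eq, card_compl_pair hrs, card_compl, card_compl, card_singleton,
    card_singleton, Fintype.card_fin] at count
  obtain ⟨m, rfl⟩ := Nat.exists_eq_add_of_le' (Fin.nontrivial_iff_two_le.mp ⟨r, s, hrs⟩)
  simp only [Nat.add_sub_cancel, Nat.add_one_sub_one] at count ⊢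
  linarith

lemma cCount_lineR_lineC_self (r : Fin n) :
    cCount n (lineR n r) (lineC n r) = n * (n - 1) * (n - 2) := by
  have count := cCount_add_card_inter (A := lineR n r) (B := lineC n r)
    (S := {r}ᶜ) (T := {r}ᶜ) (U := {r}ᶜ)
    (fun hij => by simp [lineR_eq_zero_iff _ hij, lineC_eq_zero_iff _ hij])
    (fun hij hjk hik => by
      simp [lineR_triangle_eq_iff _ hij hjk hik, lineC_triangle_eq_iff _ hij hjk hik])
  rw [inter_self, card_compl, card_singleton, Fintype.card_fin] at count
  obtain _ | _ | m := n
  · exact r.elim0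
  · simpa using count
  · simp only [Nat.add_one_sub_one, Nat.reduceSubDiff] at count ⊢
    linarith

end CommonFacets

/-- The number of facets of `Ê_n` containing each pair of lines:
`c(R^(r),R^(s)) = c(C^(r),C^(s)) = (n-1)²(n-2)`,
`c(R^(r),C^(s)) = (n-1)²(n-2) + 1` for `r ≠ s`, and
`c(R^(r),C^(r)) = n(n-1)(n-2)`. -/
theorem stmt19 (n : ℕ) (hn : 3 ≤ n) (r s : Fin n) (hrs : r ≠ s) :
    cCount n (lineR n r) (lineR n s) = (n - 1) ^ 2 * (n - 2) ∧
    cCount n (lineC n r) (lineC n s) = (n - 1) ^ 2 * (n - 2) ∧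
    cCount n (lineR n r) (lineC n s) = (n - 1) ^ 2 * (n - 2) + 1 ∧
    cCount n (lineR n r) (lineC n r) = n * (n - 1) * (n - 2) :=
  ⟨cCount_lineR_lineR hrs, cCount_lineC_lineC hrs, cCount_lineR_lineC hrs,
    cCount_lineR_lineC_self r⟩
end
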